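/- Let n ≥ 1, σ ∈ Mₙ(ℂ), and let ρ = ψψ* ∈ Mₙ(ℂ) for a unit vector ψ ∈ ℂⁿ. Then 2·tr(ρ·(σρσ* − ½{σ*σ, ρ})) + tr((σρ + ρσ* − tr(σρ + ρσ*)·ρ)²) = 0. -/

import Mathlib

open Matrix

/-! For `ρ = ψψ*`, the homodyne innovation is the derivative of `ψψ*` in the direction
`a = (σ - ⟨σ⟩)ψ`, that is, `𝒢ρ = aψ* + ψa*`. Since `a` is orthogonal to `ψ`, this gives
`tr((𝒢ρ)²) = 2‖a‖²`, which is twice the variance `⟨σ*σ⟩ - |⟨σ⟩|²`. The dissipator `𝒟ρ` compensates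
this exactly: in `tr(ρ·𝒟ρ)` the jump `σρσ*` contributes `|⟨σ⟩|²` and the anticommutator `-⟨σ*σ⟩`.

The argument is algebraic: it applies to a rank-one idempotent `vw` (a column `v` times a row `w`
with `wv = 1`) in place of `ψψ*` and to a matrix `τ` in place of `σ*`, with the covariance of `τ`
and `σ` in the role of the variance. -/

section PureState

variable {n R : Type*} [Fintype n] [CommSemiring R] {v w : n → R}

/-- The expectation `⟨X⟩` of `X` in the state `vecMulVec v w`, normalized when `w ⬝ᵥ v = 1`; for a
quantum state `w = star v`. -/
def pureExpectation (v w : n → R) (X : Matrix n n R) : R :=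
  w ⬝ᵥ X *ᵥ v

lemma trace_mul_vecMulVec (X : Matrix n n R) (v w : n → R) :
    trace (X * vecMulVec v w) = pureExpectation v w X := by
  rw [mul_vecMulVec, trace_vecMulVec, dotProduct_comm, pureExpectation]

lemma trace_vecMulVec_mul (v w : n → R) (X : Matrix n n R) :
    trace (vecMulVec v w * X) = pureExpectation v w X := by
  rw [trace_mul_comm, trace_mul_vecMulVec]

lemma vecMulVec_mul_mul_vecMulVec (v w : n → R) (X : Matrix n n R) :
    vecMulVec v w * X * vecMulVec v w = pureExpectation v w X • vecMulVec v w := by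
  rw [Matrix.mul_assoc, mul_vecMulVec, vecMulVec_mul_vecMulVec, vecMulVec_smul, pureExpectation]

lemma isIdempotentElem_vecMulVec (h : w ⬝ᵥ v = 1) : IsIdempotentElem (vecMulVec v w) := by
  rw [IsIdempotentElem, vecMulVec_mul_vecMulVec, h, one_smul]

lemma trace_vecMulVec_mul_jump (σ τ : Matrix n n R) (v w : n → R) :
    trace (vecMulVec v w * (σ * vecMulVec v w * τ))
      = pureExpectation v w τ * pureExpectation v w σ := by
  rw [← Matrix.mul_assoc, ← Matrix.mul_assoc, vecMulVec_mul_mul_vecMulVec, smul_mul, trace_smul,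
    trace_vecMulVec_mul, smul_eq_mul, mul_comm]

lemma trace_vecMulVec_mul_anticommutator (X : Matrix n n R) (h : w ⬝ᵥ v = 1) :
    trace (vecMulVec v w * (X * vecMulVec v w + vecMulVec v w * X))
      = 2 * pureExpectation v w X := by
  have left : trace (vecMulVec v w * (X * vecMulVec v w)) = pureExpectation v w X := by
    rw [trace_mul_comm, Matrix.mul_assoc, isIdempotentElem_vecMulVec h, trace_mul_vecMulVec]
  have right : trace (vecMulVec v w * (vecMulVec v w * X)) = pureExpectation v w X := by
    rw [← Matrix.mul_assoc, isIdempotentElem_vecMulVec h, trace_vecMulVec_mul]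
  rw [Matrix.mul_add, trace_add, left, right, two_mul]

lemma trace_vecMulVec_add_vecMulVec_mul_self (a b v w : n → R) :
    trace ((vecMulVec a w + vecMulVec v b) * (vecMulVec a w + vecMulVec v b))
      = (w ⬝ᵥ a) ^ 2 + 2 * ((w ⬝ᵥ v) * (b ⬝ᵥ a)) + (b ⬝ᵥ v) ^ 2 := by
  simp only [Matrix.add_mul, Matrix.mul_add, vecMulVec_mul_vecMulVec, vecMulVec_smul, trace_add,
    trace_smul, trace_vecMulVec, smul_eq_mul, dotProduct_comm a, dotProduct_comm v]
  ring

end PureState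

section PurityDrift

variable {n R : Type*} [Fintype n] [CommRing R] {v w : n → R}

/-- The covariance `⟨XY⟩ - ⟨X⟩⟨Y⟩` of `X` and `Y` in the state `vecMulVec v w`, in this order since
`X` and `Y` need not commute. The quantum variance of `σ` is the case `X = σᴴ`, `Y = σ`. -/
def pureCovariance (v w : n → R) (X Y : Matrix n n R) : R :=
  pureExpectation v w (X * Y) - pureExpectation v w X * pureExpectation v w Y

/-- The dissipator of the jump operator `σ` at `ρ`, with `τ` standing for the adjoint of `σ`. -/
def dissipator [Invertible (2 : R)] (σ τ ρ : Matrix n n R) : Matrix n n R :=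
  σ * ρ * τ - (⅟2 : R) • (τ * σ * ρ + ρ * (τ * σ))

/-- The homodyne innovation operator `𝒢` of the jump operator `σ` at `ρ`, with `τ` standing for the
adjoint of `σ`. -/
def homodyneInnovation (σ τ ρ : Matrix n n R) : Matrix n n R :=
  σ * ρ + ρ * τ - trace (σ * ρ + ρ * τ) • ρ

lemma trace_vecMulVec_mul_dissipator [Invertible (2 : R)] (σ τ : Matrix n n R)
    (h : w ⬝ᵥ v = 1) :
    trace (vecMulVec v w * dissipator σ τ (vecMulVec v w)) = -pureCovariance v w τ σ := by
  rw [dissipator, Matrix.mul_sub, Matrix.mul_smul, trace_sub, trace_smul,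
    trace_vecMulVec_mul_jump, trace_vecMulVec_mul_anticommutator _ h, smul_eq_mul,
    invOf_mul_cancel_left', pureCovariance, neg_sub]

lemma homodyneInnovation_vecMulVec (σ τ : Matrix n n R) (v w : n → R) :
    homodyneInnovation σ τ (vecMulVec v w)
      = vecMulVec (σ *ᵥ v - pureExpectation v w σ • v) w
        + vecMulVec v (w ᵥ* τ - pureExpectation v w τ • w) := by
  rw [homodyneInnovation, trace_add, trace_mul_vecMulVec, trace_vecMulVec_mul, mul_vecMulVec,
    vecMulVec_mul, sub_vecMulVec, vecMulVec_sub, smul_vecMulVec, vecMulVec_smul, add_smul]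
  abel

lemma trace_homodyneInnovation_mul_self (σ τ : Matrix n n R) (h : w ⬝ᵥ v = 1) :
    trace (homodyneInnovation σ τ (vecMulVec v w) * homodyneInnovation σ τ (vecMulVec v w))
      = 2 * pureCovariance v w τ σ := by
  set a := σ *ᵥ v - pureExpectation v w σ • v with ha
  set b := w ᵥ* τ - pureExpectation v w τ • w with hb
  have w_orthogonal_a : w ⬝ᵥ a = 0 := by
    rw [ha, dotProduct_sub, dotProduct_smul, h, pureExpectation, smul_eq_mul, mul_one, sub_self]
  have b_orthogonal_v : b ⬝ᵥ v = 0 := by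
    rw [hb, sub_dotProduct, smul_dotProduct, h, pureExpectation, dotProduct_mulVec, smul_eq_mul,
      mul_one, sub_self]
  have b_dotProduct_a : b ⬝ᵥ a = pureCovariance v w τ σ := calc
    b ⬝ᵥ a = w ᵥ* τ ⬝ᵥ a := by
      rw [hb, sub_dotProduct, smul_dotProduct, w_orthogonal_a, smul_zero, sub_zero]
    _ = w ⬝ᵥ (τ * σ) *ᵥ v - pureExpectation v w σ * (w ⬝ᵥ τ *ᵥ v) := by
      rw [ha, dotProduct_sub, dotProduct_smul, ← dotProduct_mulVec, ← dotProduct_mulVec,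
        mulVec_mulVec, smul_eq_mul]
    _ = pureCovariance v w τ σ := by
      rw [mul_comm, pureCovariance, pureExpectation, pureExpectation, pureExpectation]
  rw [homodyneInnovation_vecMulVec, trace_vecMulVec_add_vecMulVec_mul_self, w_orthogonal_a,
    b_orthogonal_v, b_dotProduct_a, h]
  ring

theorem homodyne_purity_drift_vanishes_general [Invertible (2 : R)] (σ τ : Matrix n n R)
    (h : w ⬝ᵥ v = 1) :
    2 * trace (vecMulVec v w * dissipator σ τ (vecMulVec v w))
      + trace (homodyneInnovation σ τ (vecMulVec v w) * homodyneInnovation σ τ (vecMulVec v w))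
      = 0 := by
  rw [trace_vecMulVec_mul_dissipator σ τ h, trace_homodyneInnovation_mul_self σ τ h]
  ring

end PurityDrift

/-- On pure states, the Itô drift of tr(ρ_t²) for a homodyne-detection
channel (dissipator contribution plus second-order Itô correction) vanishes:
2·tr(ρ·(σρσ* − ½{σ*σ, ρ})) + tr((𝒢ρ)²) = 0. -/
theorem homodyne_purity_drift_vanishes
    (n : ℕ) (hn : 1 ≤ n)
    (σ : Matrix (Fin n) (Fin n) ℂ)
    (ψ : Fin n → ℂ) (hψ : star ψ ⬝ᵥ ψ = 1) :
    let ρ : Matrix (Fin n) (Fin n) ℂ := vecMulVec ψ (star ψ)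
    let G : Matrix (Fin n) (Fin n) ℂ :=
      σ * ρ + ρ * σᴴ - (Matrix.trace (σ * ρ + ρ * σᴴ)) • ρ
    2 * Matrix.trace (ρ * (σ * ρ * σᴴ - (1 / 2 : ℂ) • (σᴴ * σ * ρ + ρ * (σᴴ * σ))))
      + Matrix.trace (G * G) = 0 := by
  simpa only [dissipator, homodyneInnovation, invOf_eq_inv, one_div] using
    homodyne_purity_drift_vanishes_general σ σᴴ hψ
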